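/- If Λ² < ζ², the limiting loss density f(x) = (ζ/|Λ|)·φ((ζ·Φ⁻¹(x) − Σ·Φ⁻¹(p))/|Λ|)/φ(Φ⁻¹(x)) is unimodal on (0,1): it is strictly increasing on (0, L_M], strictly decreasing on [L_M, 1), and attains its unique maximum at L_M = Φ(ζΣ·Φ⁻¹(p)/(ζ² − Λ²)). -/

import Mathlib

open MeasureTheory ProbabilityTheory Real Filter Set

/-- The density of the standard normal distribution. -/
noncomputable def stdPdf (y : ℝ) : ℝ := Real.exp (-y ^ 2 / 2) / Real.sqrt (2 * Real.pi)

/-- The cumulative distribution function `Φ` of the standard normal distribution. -/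
noncomputable def stdCdf (x : ℝ) : ℝ := ∫ y in Set.Iic x, stdPdf y

/-- The inverse `Φ⁻¹` of the standard normal cumulative distribution function: since `stdCdf`
is injective, `stdCdfInv` is the genuine inverse of `Φ` on `(0,1)`. -/
noncomputable def stdCdfInv : ℝ → ℝ := Function.invFun stdCdf

/-!
In the coordinate `y = Φ⁻¹ x`, completing the square shows that the density is a positive constant
times `exp (-(ζ² - Λ²) / (2Λ²) * (y - m)²)`, where `m = ζΣΦ⁻¹(p) / (ζ² - Λ²)`. For `Λ² < ζ²` this is
a Gaussian bump centred at `m`, and the increasing bijection `Φ : ℝ → (0, 1)` carries its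
monotonicity over to `f`.
-/

lemma lt_of_strictMonoOn_Ioc_of_strictAntiOn_Ico {α β : Type*} [LinearOrder α] [Preorder β]
    {f : α → β} {a b m x : α} (hmono : StrictMonoOn f (Ioc a m))
    (hanti : StrictAntiOn f (Ico m b)) (hx : x ∈ Ioo a b) (hne : x ≠ m) : f x < f m := by
  rcases hne.lt_or_gt with hlt | hgt
  · exact hmono ⟨hx.1, hlt.le⟩ ⟨hx.1.trans hlt, le_rfl⟩ hlt
  · exact hanti ⟨le_rfl, hgt.trans hx.2⟩ ⟨hgt.le, hx.2⟩ hgt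

section Cdf

variable (μ : Measure ℝ) [IsProbabilityMeasure μ]

lemma strictMono_cdf [μ.IsOpenPosMeasure] : StrictMono (cdf μ) := by
  intro a b hab
  have hpos : 0 < μ (Ioc a b) :=
    ((Measure.measure_Ioo_pos μ).2 hab).trans_le (measure_mono Ioo_subset_Ioc_self)
  rwa [← measure_cdf μ, StieltjesFunction.measure_Ioc, ENNReal.ofReal_pos, sub_pos] at hpos

lemma continuous_cdf [NullSingletonClass μ] : Continuous (cdf μ) := by
  refine continuous_iff_continuousAt.2 fun x => ?_
  have hjump : ENNReal.ofReal (cdf μ x - Function.leftLim (cdf μ) x) = 0 := by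
    rw [← StieltjesFunction.measure_singleton, measure_cdf, measure_singleton]
  have hleft : Function.leftLim (cdf μ) x = cdf μ x :=
    ((monotone_cdf μ).leftLim_le le_rfl).antisymm
      (sub_nonpos.1 (ENNReal.ofReal_eq_zero.1 hjump))
  rw [(monotone_cdf μ).continuousAt_iff_leftLim_eq_rightLim, hleft, StieltjesFunction.rightLim_eq]

lemma range_cdf [μ.IsOpenPosMeasure] [NullSingletonClass μ] : range (cdf μ) = Ioo 0 1 := by
  refine Subset.antisymm ?_ fun x hx => ?_
  · rintro _ ⟨y, rfl⟩
    exact ⟨(cdf_nonneg μ (y - 1)).trans_lt (strictMono_cdf μ (sub_one_lt y)),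
      (strictMono_cdf μ (lt_add_one y)).trans_le (cdf_le_one μ (y + 1))⟩
  · exact mem_range_of_exists_le_of_exists_ge (continuous_cdf μ)
      ((tendsto_cdf_atBot μ).eventually_le_const hx.1).exists
      ((tendsto_cdf_atTop μ).eventually_const_le hx.2).exists

end Cdf

lemma isOpenPosMeasure_gaussianReal (m : ℝ) {v : NNReal} (hv : v ≠ 0) :
    (gaussianReal m v).IsOpenPosMeasure :=
  (gaussianReal_absolutelyContinuous' m hv).isOpenPosMeasure

section StandardNormal

lemma stdPdf_eq_gaussianPDFReal : stdPdf = gaussianPDFReal 0 1 := by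
  funext y
  simp [stdPdf, gaussianPDFReal, div_eq_inv_mul]

lemma stdCdf_eq_cdf : stdCdf = cdf (gaussianReal 0 1) := by
  funext x
  rw [cdf_eq_real, Measure.real, gaussianReal_apply_eq_integral 0 one_ne_zero,
    ← stdPdf_eq_gaussianPDFReal, ENNReal.toReal_ofReal, stdCdf]
  exact integral_nonneg fun y => by unfold stdPdf; positivity

lemma strictMono_stdCdf : StrictMono stdCdf := by
  have := isOpenPosMeasure_gaussianReal 0 one_ne_zero
  exact stdCdf_eq_cdf ▸ strictMono_cdf _

lemma range_stdCdf : range stdCdf = Ioo 0 1 := by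
  have := isOpenPosMeasure_gaussianReal 0 one_ne_zero
  have : NullSingletonClass (gaussianReal 0 1) := nullSingletonClass_gaussianReal one_ne_zero
  exact stdCdf_eq_cdf ▸ range_cdf _

lemma stdCdf_mem_Ioo (y : ℝ) : stdCdf y ∈ Ioo 0 1 :=
  range_stdCdf ▸ mem_range_self y

lemma stdCdf_stdCdfInv {x : ℝ} (hx : x ∈ Ioo 0 1) : stdCdf (stdCdfInv x) = x :=
  Function.invFun_eq (range_stdCdf.symm ▸ hx : x ∈ range stdCdf)

lemma strictMonoOn_stdCdfInv : StrictMonoOn stdCdfInv (Ioo 0 1) := fun x hx y hy hxy =>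
  strictMono_stdCdf.lt_iff_lt.1 (by rwa [stdCdf_stdCdfInv hx, stdCdf_stdCdfInv hy])

lemma stdCdfInv_le_iff {x : ℝ} (hx : x ∈ Ioo 0 1) {y : ℝ} : stdCdfInv x ≤ y ↔ x ≤ stdCdf y := by
  rw [← strictMono_stdCdf.le_iff_le, stdCdf_stdCdfInv hx]

lemma le_stdCdfInv_iff {x : ℝ} (hx : x ∈ Ioo 0 1) {y : ℝ} : y ≤ stdCdfInv x ↔ stdCdf y ≤ x := by
  rw [← strictMono_stdCdf.le_iff_le, stdCdf_stdCdfInv hx]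

lemma strictMonoOn_comp_stdCdfInv {β : Type*} [Preorder β] {g : ℝ → β} {m : ℝ}
    (hg : StrictMonoOn g (Iic m)) : StrictMonoOn (g ∘ stdCdfInv) (Ioc 0 (stdCdf m)) := by
  have hsub : Ioc 0 (stdCdf m) ⊆ Ioo 0 1 := Ioc_subset_Ioo_right (stdCdf_mem_Ioo m).2
  exact hg.comp (strictMonoOn_stdCdfInv.mono hsub) fun x hx => (stdCdfInv_le_iff (hsub hx)).2 hx.2

lemma strictAntiOn_comp_stdCdfInv {β : Type*} [Preorder β] {g : ℝ → β} {m : ℝ}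
    (hg : StrictAntiOn g (Ici m)) : StrictAntiOn (g ∘ stdCdfInv) (Ico (stdCdf m) 1) := by
  have hsub : Ico (stdCdf m) 1 ⊆ Ioo 0 1 := Ico_subset_Ioo_left (stdCdf_mem_Ioo m).1
  exact hg.comp_strictMonoOn (strictMonoOn_stdCdfInv.mono hsub)
    fun x hx => (le_stdCdfInv_iff (hsub hx)).2 hx.1

end StandardNormal

section AffineRatio

variable {ζ Λ : ℝ}

lemma stdPdf_affine_div_stdPdf (hΛ : Λ ≠ 0) (hne : ζ ^ 2 - Λ ^ 2 ≠ 0) (c y : ℝ) :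
    stdPdf ((ζ * y - c) / Λ) / stdPdf y =
      exp (c ^ 2 / (2 * (ζ ^ 2 - Λ ^ 2))
        - (ζ ^ 2 - Λ ^ 2) / (2 * Λ ^ 2) * (y - ζ * c / (ζ ^ 2 - Λ ^ 2)) ^ 2) := by
  have hsqrt : √(2 * π) ≠ 0 := by positivity
  rw [stdPdf, stdPdf, div_div_div_cancel_right₀ hsqrt, ← exp_sub]
  congr 1
  field_simp
  ring

lemma stdPdf_affine_div_stdPdf_lt_iff (hΛ : Λ ≠ 0) (hlt : Λ ^ 2 < ζ ^ 2) (c a b : ℝ) :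
    stdPdf ((ζ * a - c) / Λ) / stdPdf a < stdPdf ((ζ * b - c) / Λ) / stdPdf b ↔
      |b - ζ * c / (ζ ^ 2 - Λ ^ 2)| < |a - ζ * c / (ζ ^ 2 - Λ ^ 2)| := by
  have hgap : 0 < ζ ^ 2 - Λ ^ 2 := sub_pos.2 hlt
  have hcoef : 0 < (ζ ^ 2 - Λ ^ 2) / (2 * Λ ^ 2) := by positivity
  rw [stdPdf_affine_div_stdPdf hΛ hgap.ne', stdPdf_affine_div_stdPdf hΛ hgap.ne', exp_lt_exp,
    sub_lt_sub_iff_left, mul_lt_mul_iff_right₀ hcoef, sq_lt_sq]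

lemma strictMonoOn_stdPdf_affine_div_stdPdf (hΛ : Λ ≠ 0) (hlt : Λ ^ 2 < ζ ^ 2) (c : ℝ) :
    StrictMonoOn (fun y => stdPdf ((ζ * y - c) / Λ) / stdPdf y)
      (Iic (ζ * c / (ζ ^ 2 - Λ ^ 2))) := by
  intro a ha b hb hab
  rw [stdPdf_affine_div_stdPdf_lt_iff hΛ hlt, abs_of_nonpos (sub_nonpos.2 hb),
    abs_of_nonpos (sub_nonpos.2 ha)]
  gcongr

lemma strictAntiOn_stdPdf_affine_div_stdPdf (hΛ : Λ ≠ 0) (hlt : Λ ^ 2 < ζ ^ 2) (c : ℝ) :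
    StrictAntiOn (fun y => stdPdf ((ζ * y - c) / Λ) / stdPdf y)
      (Ici (ζ * c / (ζ ^ 2 - Λ ^ 2))) := by
  intro a ha b hb hab
  rw [stdPdf_affine_div_stdPdf_lt_iff hΛ hlt, abs_of_nonneg (sub_nonneg.2 ha),
    abs_of_nonneg (sub_nonneg.2 hb)]
  gcongr

end AffineRatio

/-- if `Λ² < ζ²`, the limiting loss density is unimodal on `(0,1)`, strictly
increasing on `(0, L_M]`, strictly decreasing on `[L_M, 1)`, with unique maximum at
`L_M = Φ(ζΣΦ⁻¹(p)/(ζ² − Λ²))`. -/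
theorem limiting_density_unimodal
    (Sg ζ Λ p : ℝ)
    (hSg : 0 < Sg) (hζ : 0 < ζ) (hΛ : Λ ≠ 0) (hp : p ∈ Set.Ioo (0 : ℝ) 1)
    (f : ℝ → ℝ)
    (hf : ∀ x ∈ Set.Ioo (0 : ℝ) 1,
      f x = (ζ / |Λ|) * stdPdf ((ζ * stdCdfInv x - Sg * stdCdfInv p) / |Λ|)
              / stdPdf (stdCdfInv x))
    (hcase : Λ ^ 2 < ζ ^ 2)
    (LM : ℝ) (hLM : LM = stdCdf (ζ * Sg * stdCdfInv p / (ζ ^ 2 - Λ ^ 2))) :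
    StrictMonoOn f (Set.Ioc 0 LM) ∧ StrictAntiOn f (Set.Ico LM 1) ∧
      ∀ x ∈ Set.Ioo (0 : ℝ) 1, x ≠ LM → f x < f LM := by
  have hΛ' : |Λ| ≠ 0 := abs_ne_zero.2 hΛ
  have hcase' : |Λ| ^ 2 < ζ ^ 2 := by rwa [sq_abs]
  rw [mul_assoc, ← sq_abs Λ] at hLM
  have hLM_mem : LM ∈ Ioo 0 1 := hLM ▸ stdCdf_mem_Ioo _
  have hscale : StrictMono (ζ / |Λ| * ·) := strictMono_mul_left_of_pos (by positivity)
  let ratio (y : ℝ) : ℝ := stdPdf ((ζ * y - Sg * stdCdfInv p) / |Λ|) / stdPdf y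
  have hf_eq : EqOn (fun x => ζ / |Λ| * ratio (stdCdfInv x)) f (Ioo 0 1) := fun x hx =>
    ((hf x hx).trans (mul_div_assoc _ _ _)).symm
  have hmono : StrictMonoOn f (Ioc 0 LM) := by
    refine StrictMonoOn.congr ?_ (hf_eq.mono (Ioc_subset_Ioo_right hLM_mem.2))
    exact hscale.comp_strictMonoOn
      (hLM ▸ strictMonoOn_comp_stdCdfInv (strictMonoOn_stdPdf_affine_div_stdPdf hΛ' hcase' _))
  have hanti : StrictAntiOn f (Ico LM 1) := by
    refine StrictAntiOn.congr ?_ (hf_eq.mono (Ico_subset_Ioo_left hLM_mem.1))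
    exact hscale.comp_strictAntiOn
      (hLM ▸ strictAntiOn_comp_stdCdfInv (strictAntiOn_stdPdf_affine_div_stdPdf hΛ' hcase' _))
  exact ⟨hmono, hanti, fun _ => lt_of_strictMonoOn_Ioc_of_strictAntiOn_Ico hmono hanti⟩
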